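/- Safe Execution: If ∅ ⊢ S ⇒ Γ' and ⟨S, σ₀⟩ ↝* ⟨S', σ'⟩ (reflexive-transitive closure of the small-step relation) from a store σ₀ well-typed for the empty context, then the configuration ⟨S', σ'⟩ is not stuck: either S' is skip or there exist S'' and σ'' with ⟨S', σ'⟩ ↝ ⟨S'', σ''⟩. -/

import Mathlib

inductive Ty : Type
  | int
  | bool
deriving DecidableEq

inductive Expr : Type
  | int (n : ℤ)
  | tt
  | ff
  | var (x : String)
  | plus (e₁ e₂ : Expr)
  | isOp (e₁ e₂ : Expr)

inductive Val : Type
  | int (n : ℤ)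
  | bool (b : Bool)

/-- A value has a type: integer values have type `Int`, booleans have type `Bool`. -/
inductive ValHasTy : Val → Ty → Prop
  | int (n : ℤ) : ValHasTy (.int n) .int
  | bool (b : Bool) : ValHasTy (.bool b) .bool

/-- Typing contexts: finite maps from variables to types. -/
def Ctx : Type := String → Option Ty

/-- Stores: partial maps from variables to values. -/
def Store : Type := String → Option Val

/-- Expression typing `Γ ⊢ e : τ`. -/
inductive HasTy : Ctx → Expr → Ty → Prop
  | int (Γ : Ctx) (n : ℤ) : HasTy Γ (.int n) .int
  | tt (Γ : Ctx) : HasTy Γ .tt .bool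
  | ff (Γ : Ctx) : HasTy Γ .ff .bool
  | var (Γ : Ctx) (x : String) (τ : Ty) : Γ x = some τ → HasTy Γ (.var x) τ
  | plus (Γ : Ctx) (e₁ e₂ : Expr) :
      HasTy Γ e₁ .int → HasTy Γ e₂ .int → HasTy Γ (.plus e₁ e₂) .int
  | rel (Γ : Ctx) (e₁ e₂ : Expr) (τ : Ty) :
      HasTy Γ e₁ τ → HasTy Γ e₂ τ → HasTy Γ (.isOp e₁ e₂) .bool

inductive Stmt : Type
  | skip
  | letBe (x : String) (e : Expr)
  | ifThenElse (e : Expr) (s₁ s₂ : Stmt)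
  | print (e : Expr)
  | seq (s₁ s₂ : Stmt)

/-- Statement typing `Γ ⊢ S ⇒ Γ'`. -/
inductive StmtTy : Ctx → Stmt → Ctx → Prop
  | skip (Γ : Ctx) : StmtTy Γ .skip Γ
  | letBe (Γ : Ctx) (x : String) (e : Expr) (τ : Ty) :
      HasTy Γ e τ → StmtTy Γ (.letBe x e) (fun y => if y = x then some τ else Γ y)
  | ifThenElse (Γ : Ctx) (e : Expr) (s₁ s₂ : Stmt) :
      HasTy Γ e .bool → StmtTy Γ s₁ Γ → StmtTy Γ s₂ Γ →
      StmtTy Γ (.ifThenElse e s₁ s₂) Γ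
  | print (Γ : Ctx) (e : Expr) (τ : Ty) : HasTy Γ e τ → StmtTy Γ (.print e) Γ
  | seq (Γ Γ' Γ'' : Ctx) (s₁ s₂ : Stmt) :
      StmtTy Γ s₁ Γ' → StmtTy Γ' s₂ Γ'' → StmtTy Γ (.seq s₁ s₂) Γ''

/-- Big-step expression evaluation `σ ⊢ e ⇓ v`. -/
inductive Eval : Store → Expr → Val → Prop
  | int (σ : Store) (n : ℤ) : Eval σ (.int n) (.int n)
  | tt (σ : Store) : Eval σ .tt (.bool true)
  | ff (σ : Store) : Eval σ .ff (.bool false)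
  | var (σ : Store) (x : String) (v : Val) : σ x = some v → Eval σ (.var x) v
  | plus (σ : Store) (e₁ e₂ : Expr) (n₁ n₂ : ℤ) :
      Eval σ e₁ (.int n₁) → Eval σ e₂ (.int n₂) →
      Eval σ (.plus e₁ e₂) (.int (n₁ + n₂))
  | isInt (σ : Store) (e₁ e₂ : Expr) (n₁ n₂ : ℤ) :
      Eval σ e₁ (.int n₁) → Eval σ e₂ (.int n₂) →
      Eval σ (.isOp e₁ e₂) (.bool (n₁ == n₂))
  | isBool (σ : Store) (e₁ e₂ : Expr) (b₁ b₂ : Bool) :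
      Eval σ e₁ (.bool b₁) → Eval σ e₂ (.bool b₂) →
      Eval σ (.isOp e₁ e₂) (.bool (b₁ == b₂))

/-- Small-step statement semantics `⟨S, σ⟩ ↝ ⟨S', σ'⟩`. -/
inductive Step : Stmt → Store → Stmt → Store → Prop
  | letBe (σ : Store) (x : String) (e : Expr) (v : Val) :
      Eval σ e v → Step (.letBe x e) σ .skip (fun y => if y = x then some v else σ y)
  | ifTrue (σ : Store) (e : Expr) (s₁ s₂ : Stmt) :
      Eval σ e (.bool true) → Step (.ifThenElse e s₁ s₂) σ s₁ σ
  | ifFalse (σ : Store) (e : Expr) (s₁ s₂ : Stmt) :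
      Eval σ e (.bool false) → Step (.ifThenElse e s₁ s₂) σ s₂ σ
  | print (σ : Store) (e : Expr) (v : Val) : Eval σ e v → Step (.print e) σ .skip σ
  | seqSkip (σ : Store) (s₂ : Stmt) : Step (.seq .skip s₂) σ s₂ σ
  | seqStep (σ σ' : Store) (s₁ s₁' s₂ : Stmt) :
      Step s₁ σ s₁' σ' → Step (.seq s₁ s₂) σ (.seq s₁' s₂) σ'

/-- `σ ⊨ Γ`: the store is well-typed for the context. -/
def StoreTy (σ : Store) (Γ : Ctx) : Prop :=
  ∀ x τ, Γ x = some τ → ∃ v, σ x = some v ∧ ValHasTy v τ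

/-- The empty typing context. -/
def emptyCtx : Ctx := fun _ => none

/-- One step of the small-step semantics, as a relation on configurations. -/
def StepConf : Stmt × Store → Stmt × Store → Prop :=
  fun c c' => Step c.1 c.2 c'.1 c'.2

/-!
Execution changes the context in which the remaining statement is typed, since each `Let` may add
a variable or change its type, but it never changes the output context `Γ'`. The invariant of
execution is therefore the existence of *some* context that types the store and from which the
remaining statement leads to `Γ'`: every step preserves it, and it rules out stuckness.
-/

section Expressions

variable {Γ : Ctx} {σ : Store} {e : Expr} {v : Val} {τ : Ty}

theorem ValHasTy.exists_eq_int (hv : ValHasTy v .int) : ∃ n, v = .int n := by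
  cases hv with
  | int n => exact ⟨n, rfl⟩

theorem ValHasTy.exists_eq_bool (hv : ValHasTy v .bool) : ∃ b, v = .bool b := by
  cases hv with
  | bool b => exact ⟨b, rfl⟩

theorem Eval.exists_isOp {e₁ e₂ : Expr} {v₁ v₂ : Val} (he₁ : Eval σ e₁ v₁) (he₂ : Eval σ e₂ v₂)
    (hv₁ : ValHasTy v₁ τ) (hv₂ : ValHasTy v₂ τ) : ∃ b, Eval σ (.isOp e₁ e₂) (.bool b) := by
  cases τ with
  | int =>
    obtain ⟨n₁, rfl⟩ := hv₁.exists_eq_int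
    obtain ⟨n₂, rfl⟩ := hv₂.exists_eq_int
    exact ⟨_, .isInt σ e₁ e₂ n₁ n₂ he₁ he₂⟩
  | bool =>
    obtain ⟨b₁, rfl⟩ := hv₁.exists_eq_bool
    obtain ⟨b₂, rfl⟩ := hv₂.exists_eq_bool
    exact ⟨_, .isBool σ e₁ e₂ b₁ b₂ he₁ he₂⟩

theorem HasTy.exists_eval (he : HasTy Γ e τ) (hσ : StoreTy σ Γ) :
    ∃ v, Eval σ e v ∧ ValHasTy v τ := by
  induction he with
  | int n => exact ⟨.int n, .int σ n, .int n⟩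
  | tt => exact ⟨.bool true, .tt σ, .bool true⟩
  | ff => exact ⟨.bool false, .ff σ, .bool false⟩
  | var x τ hx =>
    obtain ⟨v, hxv, hv⟩ := hσ x τ hx
    exact ⟨v, .var σ x v hxv, hv⟩
  | plus e₁ e₂ _ _ ih₁ ih₂ =>
    obtain ⟨v₁, he₁, hv₁⟩ := ih₁
    obtain ⟨v₂, he₂, hv₂⟩ := ih₂
    obtain ⟨n₁, rfl⟩ := hv₁.exists_eq_int
    obtain ⟨n₂, rfl⟩ := hv₂.exists_eq_int
    exact ⟨.int (n₁ + n₂), .plus σ e₁ e₂ n₁ n₂ he₁ he₂, .int (n₁ + n₂)⟩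
  | rel e₁ e₂ τ _ _ ih₁ ih₂ =>
    obtain ⟨v₁, he₁, hv₁⟩ := ih₁
    obtain ⟨v₂, he₂, hv₂⟩ := ih₂
    obtain ⟨b, hb⟩ := he₁.exists_isOp he₂ hv₁ hv₂
    exact ⟨.bool b, hb, .bool b⟩

theorem StoreTy.valHasTy {x : String} (hσ : StoreTy σ Γ) (hx : Γ x = some τ)
    (hxv : σ x = some v) : ValHasTy v τ := by
  obtain ⟨w, hxw, hw⟩ := hσ x τ hx
  obtain rfl : v = w := Option.some.inj (hxv.symm.trans hxw)
  exact hw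

theorem Eval.valHasTy (hev : Eval σ e v) (he : HasTy Γ e τ) (hσ : StoreTy σ Γ) :
    ValHasTy v τ := by
  cases he with
  | var x _ hx =>
    cases hev with
    | var _ _ hxv => exact hσ.valHasTy hx hxv
  | _ => cases hev <;> constructor

theorem StoreTy.update (hσ : StoreTy σ Γ) (hv : ValHasTy v τ) (x : String) :
    StoreTy (fun y => if y = x then some v else σ y) (fun y => if y = x then some τ else Γ y) := by
  intro y τ' hy
  by_cases hyx : y = x
  · obtain rfl : τ = τ' := by simpa only [if_pos hyx, Option.some.injEq] using hy
    exact ⟨v, if_pos hyx, hv⟩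
  · simp only [if_neg hyx] at hy ⊢
    exact hσ y τ' hy

end Expressions

/-- Typing `⊢ ⟨S, σ⟩ ⇒ Γ'` of configurations, the invariant of execution: the store is well-typed
for some context from which the statement leads to `Γ'`. -/
def ConfTy (c : Stmt × Store) (Γ' : Ctx) : Prop :=
  ∃ Γ, StmtTy Γ c.1 Γ' ∧ StoreTy c.2 Γ

section Configurations

variable {Γ Γ' : Ctx} {S S' : Stmt} {σ σ' : Store} {c c' : Stmt × Store}

theorem StmtTy.eq_skip_or_exists_step (hS : StmtTy Γ S Γ') (hσ : StoreTy σ Γ) :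
    S = .skip ∨ ∃ S' σ', Step S σ S' σ' := by
  induction hS with
  | skip => exact .inl rfl
  | letBe Γ x e τ he =>
    obtain ⟨v, hev, -⟩ := he.exists_eval hσ
    exact .inr ⟨_, _, .letBe σ x e v hev⟩
  | ifThenElse Γ e S₁ S₂ he =>
    obtain ⟨v, hev, hv⟩ := he.exists_eval hσ
    obtain ⟨_ | _, rfl⟩ := hv.exists_eq_bool
    · exact .inr ⟨S₂, σ, .ifFalse σ e S₁ S₂ hev⟩
    · exact .inr ⟨S₁, σ, .ifTrue σ e S₁ S₂ hev⟩
  | print Γ e τ he =>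
    obtain ⟨v, hev, -⟩ := he.exists_eval hσ
    exact .inr ⟨.skip, σ, .print σ e v hev⟩
  | seq Γ Δ _ S₁ S₂ _ _ ih₁ =>
    obtain rfl | ⟨S₁', σ', hstep⟩ := ih₁ hσ
    · exact .inr ⟨S₂, σ, .seqSkip σ S₂⟩
    · exact .inr ⟨.seq S₁' S₂, σ', .seqStep σ σ' S₁ S₁' S₂ hstep⟩

theorem Step.confTy (hstep : Step S σ S' σ') (hS : StmtTy Γ S Γ') (hσ : StoreTy σ Γ) :
    ConfTy (S', σ') Γ' := by
  induction hstep generalizing Γ' with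
  | letBe σ x e v hev =>
    cases hS with
    | letBe _ _ _ τ he => exact ⟨_, .skip _, hσ.update (hev.valHasTy he hσ) x⟩
  | ifTrue =>
    cases hS with
    | ifThenElse _ _ _ _ _ hS₁ _ => exact ⟨_, hS₁, hσ⟩
  | ifFalse =>
    cases hS with
    | ifThenElse _ _ _ _ _ _ hS₂ => exact ⟨_, hS₂, hσ⟩
  | print =>
    cases hS
    exact ⟨_, .skip _, hσ⟩
  | seqSkip =>
    cases hS with
    | seq _ _ _ _ _ hskip hS₂ =>
      cases hskip
      exact ⟨_, hS₂, hσ⟩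
  | seqStep _ _ _ S₁' S₂ _ ih =>
    cases hS with
    | seq _ Δ _ _ _ hS₁ hS₂ =>
      obtain ⟨Γ₁, hS₁', hσ'⟩ := ih hS₁ hσ
      exact ⟨Γ₁, .seq Γ₁ Δ _ S₁' S₂ hS₁' hS₂, hσ'⟩

theorem ConfTy.of_reflTransGen (hc : ConfTy c Γ') (hsteps : Relation.ReflTransGen StepConf c c') :
    ConfTy c' Γ' := by
  induction hsteps with
  | refl => exact hc
  | tail _ hstep ih =>
    obtain ⟨Γ, hS, hσ⟩ := ih
    exact Step.confTy hstep hS hσ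

theorem safe_execution_general {σ₀ : Store} (hty : StmtTy Γ S Γ') (hσ₀ : StoreTy σ₀ Γ)
    (hsteps : Relation.ReflTransGen StepConf (S, σ₀) (S', σ')) :
    S' = .skip ∨ ∃ S'' σ'', Step S' σ' S'' σ'' := by
  have hc₀ : ConfTy (S, σ₀) Γ' := ⟨Γ, hty, hσ₀⟩
  obtain ⟨Δ, hS', hσ'⟩ := hc₀.of_reflTransGen hsteps
  exact hS'.eq_skip_or_exists_step hσ'

end Configurations

/-- **Safe execution**: starting from a well-typed statement and a store
well-typed for the empty context, no reachable configuration is stuck. -/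
theorem safe_execution (S : Stmt) (Γ' : Ctx) (σ₀ : Store) (S' : Stmt) (σ' : Store)
    (hty : StmtTy emptyCtx S Γ') (hσ₀ : StoreTy σ₀ emptyCtx)
    (hsteps : Relation.ReflTransGen StepConf (S, σ₀) (S', σ')) :
    S' = .skip ∨ ∃ S'' σ'', Step S' σ' S'' σ'' :=
  safe_execution_general hty hσ₀ hsteps
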